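/- For an arbitrary prime power q, an integer r ≥ 2, and any divisor t of q−1, the graph G(q^{r−1}, t·(1+q+⋯+q^{r−2})) is K_{r, t^{r−1}(r−1)!+1}-free; concretely, any r pairwise distinct vertices of this graph have at most t^{r−1}·(r−1)! common neighbors. -/

import Mathlib

/-- The scaling relation by the subgroup `H ≤ Fˣ` on nonzero pairs of field elements:
`(a₁,b₁) ∼ (a₂,b₂)` iff there is `h ∈ H` with `a₁ = h·a₂` and `b₁ = h·b₂`. -/
def Grel {F : Type} [Field F] (H : Subgroup Fˣ) (p p' : {p : F × F // p ≠ 0}) : Prop :=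
  ∃ h ∈ H, p.1.1 = (h : F) * p'.1.1 ∧ p.1.2 = (h : F) * p'.1.2

/-- The vertex set of the graph `G(q,t)`: nonzero pairs modulo scaling by `H`. -/
def GVertex (F : Type) [Field F] (H : Subgroup Fˣ) : Type :=
  Quot (Grel H)

/-- Membership of a field element in the subgroup `H ≤ Fˣ`. -/
def memH {F : Type} [Field F] (H : Subgroup Fˣ) (x : F) : Prop :=
  ∃ h ∈ H, (h : F) = x

/-- Adjacency in the graph `G(q,t)`: `⟨a,b⟩` and `⟨x,y⟩` are adjacent iff `a·x + b·y ∈ H`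
(this condition is independent of the chosen representatives). -/
def GAdj {F : Type} [Field F] (H : Subgroup Fˣ) (u v : GVertex F H) : Prop :=
  ∃ p p' : {p : F × F // p ≠ 0},
    u = Quot.mk (Grel H) p ∧ v = Quot.mk (Grel H) p' ∧
      memH H (p.1.1 * p'.1.1 + p.1.2 * p'.1.2)

/-!
Fix `r` distinct vertices `⟨a⟩, ⟨b₁⟩, …, ⟨bᵣ₋₁⟩` with a common neighbor. Then any two of their
representatives are linearly independent, and every common neighbor has a representative `x` with
`pairing x a = 1`. In the coordinate `u = pairing x b₁` on this line, the other conditions read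
`d i * (u + c i) ∈ H` with distinct `c i`. The power `1 + q + ⋯ + q ^ (r - 2)` of each of these
elements is a `t`-th root of unity, and there are at most `t ^ (r - 1)` choices of these roots.
Each choice gives a system `∏ j, (u + c i) ^ q ^ j = z i`, that is, `∏ j, (x j - a i j) = b i` at
`x j = u ^ q ^ j`.

By a lemma of Kollár, Rónyai and Szabó such a system of `n` equations in `n` unknowns, with distinct
entries in each column of `a`, has at most `n!` solutions. The map `x ↦ (∏ j, (x j - a i j))ᵢ` is
finite: a valuation that is large at some `x j` must be small at another factor of every row, and
two rows cannot share such a factor. The `n!` points of the fibre over `0` generate the algebra at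
`0`, which bounds its rank by `n!`, and the rank bounds the size of every fibre.
-/

section Integrality

variable {ι κ : Type*} [Fintype ι] [Fintype κ]

lemma valuation_le_one_of_prod_sub_le_one {L Γ₀ : Type*} [CommRing L]
    [LinearOrderedCommGroupWithZero Γ₀] (v : Valuation L Γ₀)
    (hcard : Fintype.card κ ≤ Fintype.card ι) {a : ι → κ → L} (ha : ∀ i j, v (a i j) ≤ 1)
    (hsep : ∀ i i' j, i ≠ i' → v (a i j - a i' j) = 1) {x : κ → L}
    (hx : ∀ i, v (∏ j, (x j - a i j)) ≤ 1) (j : κ) : v (x j) ≤ 1 := by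
  classical
  by_contra! hj
  have exists_small (i : ι) : ∃ k ≠ j, v (x k - a i k) < 1 := by
    by_contra! hlarge
    have hj' : 1 < v (x j - a i j) := by
      rwa [v.map_sub_eq_of_lt_left ((ha i j).trans_lt hj)]
    refine (hx i).not_gt ?_
    rw [map_prod, ← Finset.mul_prod_erase _ _ (Finset.mem_univ j)]
    exact one_lt_mul_of_lt_of_le hj'
      (Finset.one_le_prod' fun k hk => hlarge k (Finset.ne_of_mem_erase hk))
  choose k hkj hk using exists_small
  have k_injective : Function.Injective k := by
    intro i i' hii'
    by_contra hne
    have hdiff : v ((x (k i) - a i' (k i)) - (x (k i) - a i (k i))) < 1 :=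
      v.map_sub_lt (hii' ▸ hk i') (hk i)
    rw [sub_sub_sub_cancel_left] at hdiff
    exact hdiff.ne (hsep i i' (k i) hne)
  obtain ⟨i, hi⟩ := (k_injective.bijective_of_nat_card_le (by simpa using hcard)).2 j
  exact hkj i hi

lemma isIntegral_of_prod_sub_mem_range {R K : Type*} [CommRing R] [Field K] [Algebra R K]
    (hcard : Fintype.card κ ≤ Fintype.card ι) {a : ι → κ → R}
    (ha : ∀ i i' j, i ≠ i' → IsUnit (a i j - a i' j)) {x : κ → K}
    (hx : ∀ i, ∏ j, (x j - algebraMap R K (a i j)) ∈ (algebraMap R K).range) (j : κ) :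
    IsIntegral R (x j) := by
  by_contra hj
  obtain ⟨V, hRV, hjV⟩ := Subring.exists_le_valuationSubring_of_isIntegrallyClosedIn
    (R := (integralClosure R K).toSubring) hj
  let toV : R →+* V := (algebraMap R K).codRestrict V.toSubring
    fun r => hRV (algebraMap_mem (integralClosure R K) r)
  refine hjV ((V.valuation_le_one_iff _).1 ?_)
  refine valuation_le_one_of_prod_sub_le_one V.valuation hcard
    (fun i j => V.valuation_le_one (toV (a i j))) ?_ ?_ j
  · intro i i' j hne
    simpa using (V.valuation_eq_one_iff _).1 ((ha i i' j hne).map toV)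
  · intro i
    obtain ⟨r, hr⟩ := hx i
    exact hr ▸ V.valuation_le_one (toV r)

end Integrality

section FiniteExtensions

open MvPolynomial

lemma finrank_le_card_of_top_le_span_sup_smul_top {R M σ : Type*} [CommRing R] [IsDomain R]
    [AddCommGroup M] [Module R M] [Module.Finite R M] [Module.IsTorsionFree R M] [Fintype σ]
    {I : Ideal R} (hI : I ≠ ⊤) (e : σ → M)
    (he : ⊤ ≤ Submodule.span R (Set.range e) ⊔ I • (⊤ : Submodule R M)) :
    Module.finrank R M ≤ Fintype.card σ := by
  obtain ⟨f, hfI, hf⟩ := Submodule.exists_sub_one_mem_and_smul_le_of_fg_of_le_sup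
    (Module.finite_def.1 ‹_›) le_rfl he
  have hf0 : f ≠ 0 := by
    rintro rfl
    exact (Ideal.ne_top_iff_one I).1 hI (by simpa using I.neg_mem hfI)
  have := Module.Finite.span_of_finite R (Set.finite_range e)
  let mulf : M →ₗ[R] Submodule.span R (Set.range e) :=
    (LinearMap.lsmul R M f).codRestrict _ fun x =>
      hf (Submodule.smul_mem_pointwise_smul x f ⊤ trivial)
  have hmulf : Function.Injective mulf := fun x y hxy =>
    smul_right_injective M hf0 (congrArg Subtype.val hxy)
  calc Module.finrank R M ≤ Module.finrank R (Submodule.span R (Set.range e)) :=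
        LinearMap.finrank_le_finrank_of_injective hmulf
    _ ≤ Fintype.card σ := finrank_range_le_card e

lemma natDegree_minpoly_le_finrank {A B : Type*} [CommRing A] [IsDomain A] [IsIntegrallyClosed A]
    [CommRing B] [IsDomain B] [Algebra A B] [Module.Finite A B] [Module.IsTorsionFree A B] (θ : B) :
    (minpoly A θ).natDegree ≤ Module.finrank A B := by
  let K := FractionRing A
  let L := FractionRing B
  let : Algebra K L := FractionRing.liftAlgebra A L
  have : Module.Finite K L := Module.Finite.of_isLocalization A B (nonZeroDivisors A)
  have hθ : IsIntegral A θ := Algebra.IsIntegral.isIntegral θ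
  calc (minpoly A θ).natDegree = (minpoly K (algebraMap B L θ)).natDegree := by
        rw [minpoly.isIntegrallyClosed_eq_field_fractions K L hθ, (minpoly.monic hθ).natDegree_map]
    _ ≤ Module.finrank K L := minpoly.natDegree_le _
    _ = Module.finrank A B := IsFractionRing.finrank_eq A K B L

lemma card_le_finrank_of_comp_algebraMap_eq {A B K T : Type*} [CommRing A] [IsDomain A]
    [IsIntegrallyClosed A] [CommRing B] [IsDomain B] [Algebra A B] [Module.Finite A B]
    [Module.IsTorsionFree A B] [CommRing K] [IsDomain K] [Fintype T] {β : A →+* K}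
    {f : T → B →+* K} (hf : ∀ t, (f t).comp (algebraMap A B) = β) {θ : B}
    (hθ : Function.Injective fun t => f t θ) : Fintype.card T ≤ Module.finrank A B := by
  classical
  let Q : Polynomial K := (minpoly A θ).map β
  have hQ : Q ≠ 0 := ((minpoly.monic (Algebra.IsIntegral.isIntegral θ)).map β).ne_zero
  have isRoot (t : T) : Q.IsRoot (f t θ) := by
    rw [Polynomial.IsRoot, Polynomial.eval_map, ← hf t, ← Polynomial.hom_eval₂,
      ← Polynomial.aeval_def, minpoly.aeval, map_zero]
  calc Fintype.card T ≤ Q.roots.toFinset.card :=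
        Finset.card_le_card_of_injOn (fun t => f t θ)
          (fun t _ => by simpa [hQ] using isRoot t) hθ.injOn
    _ ≤ Q.roots.card := Multiset.toFinset_card_le _
    _ ≤ Q.natDegree := Q.card_roots'
    _ ≤ (minpoly A θ).natDegree := Polynomial.natDegree_map_le
    _ ≤ Module.finrank A B := natDegree_minpoly_le_finrank θ

lemma injective_of_isIntegral_of_card_le {ι κ R : Type*} [CommRing R] [IsDomain R]
    [Fintype ι] [Fintype κ] (hcard : Fintype.card ι ≤ Fintype.card κ)
    {φ : MvPolynomial ι R →ₐ[R] MvPolynomial κ R} (hφ : φ.toRingHom.IsIntegral) :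
    Function.Injective φ := by
  obtain ⟨g, rfl⟩ : ∃ g, φ = aeval g := ⟨fun i => φ (X i), aeval_unique φ⟩
  have : Algebra.IsIntegral (Algebra.adjoin R (Set.range g)) (MvPolynomial κ R) := by
    rw [Algebra.adjoin_range_eq_range_aeval]
    exact ⟨RingHom.IsIntegral.tower_top (aeval g).rangeRestrict.toRingHom _ hφ⟩
  refine (Algebra.IsAlgebraic.isTranscendenceBasis_of_lift_le_trdeg_of_finite R g ?_).1
  simpa [trdeg_of_isDomain] using hcard

end FiniteExtensions

section Ideals

open MvPolynomial

lemma exists_equiv_forall_mem_iff {ι κ B : Type*} [Fintype ι] [Fintype κ] [CommRing B]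
    (hcard : Fintype.card κ ≤ Fintype.card ι) {y : ι → κ → B}
    (hy : ∀ i i' j, i ≠ i' → IsUnit (y i j - y i' j)) {𝔭 : Ideal B} (h𝔭 : 𝔭.IsPrime)
    (hprod : ∀ i, ∏ j, y i j ∈ 𝔭) : ∃ σ : κ ≃ ι, ∀ i j, y i j ∈ 𝔭 ↔ σ j = i := by
  have eq_of_mem {i i' : ι} {j : κ} (hi : y i j ∈ 𝔭) (hi' : y i' j ∈ 𝔭) : i = i' := by
    by_contra hne
    exact h𝔭.ne_top (𝔭.eq_top_of_isUnit_mem (𝔭.sub_mem hi hi') (hy i i' j hne))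
  have exists_mem (i : ι) : ∃ j, y i j ∈ 𝔭 := by
    simpa using h𝔭.prod_mem_iff.1 (hprod i)
  choose f hf using exists_mem
  have f_injective : Function.Injective f := fun i i' h => eq_of_mem (hf i) (h ▸ hf i')
  let σ : ι ≃ κ := Equiv.ofBijective f
    (f_injective.bijective_of_nat_card_le (by simpa using hcard))
  have mem_σ (j : κ) : y (σ.symm j) j ∈ 𝔭 := by
    obtain ⟨i, rfl⟩ := σ.surjective j
    exact (σ.symm_apply_apply i).symm ▸ hf i
  exact ⟨σ.symm, fun i j => ⟨eq_of_mem (mem_σ j), fun h => h ▸ mem_σ j⟩⟩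

lemma iInf_span_le_span_prod {ι κ B : Type*} [Fintype ι] [Fintype κ] [CommRing B]
    (hcard : Fintype.card κ ≤ Fintype.card ι) {y : ι → κ → B}
    (hy : ∀ i i' j, i ≠ i' → IsUnit (y i j - y i' j)) :
    ⨅ σ : κ ≃ ι, Ideal.span (Set.range fun j => y (σ j) j) ≤
      Ideal.span (Set.range fun i => ∏ j, y i j) := by
  classical
  set I := Ideal.span (Set.range fun i => ∏ j, y i j)
  have prod_mem (i : ι) : ∏ j, y i j ∈ I := Ideal.subset_span ⟨i, rfl⟩
  intro p hp
  by_contra hpI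
  obtain ⟨𝔫, h𝔫, colon_le⟩ := (I.colon {p}).exists_le_maximal <| by
    rw [Ideal.ne_top_iff_one, Submodule.mem_colon_singleton, one_smul]
    exact hpI
  obtain ⟨σ, hσ⟩ := exists_equiv_forall_mem_iff hcard hy h𝔫.isPrime fun i =>
    colon_le (Submodule.mem_colon_singleton.2 (I.mul_mem_right p (prod_mem i)))
  -- The factors outside `𝔫` are units locally at `𝔫`, so `I` contains each `y (σ j) j` there.
  let h : B := ∏ j, ∏ j' ∈ Finset.univ.erase j, y (σ j) j'
  have h_notMem : h ∉ 𝔫 := by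
    simp only [h, h𝔫.isPrime.prod_mem_iff, hσ, σ.injective.eq_iff, Finset.mem_erase]
    rintro ⟨j, -, j', ⟨hne, -⟩, rfl⟩
    exact hne rfl
  have span_le_colon : Ideal.span (Set.range fun j => y (σ j) j) ≤ I.colon {h} := by
    rw [Ideal.span_le]
    rintro _ ⟨j, rfl⟩
    refine Submodule.mem_colon_singleton.2 (I.mem_of_dvd ?_ (prod_mem (σ j)))
    rw [← Finset.mul_prod_erase _ _ (Finset.mem_univ j)]
    exact mul_dvd_mul_left _ (Finset.dvd_prod_of_mem _ (Finset.mem_univ j))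
  have hp_colon := span_le_colon (Ideal.mem_iInf.1 hp σ)
  rw [Submodule.mem_colon_singleton, smul_eq_mul, mul_comm] at hp_colon
  exact h_notMem (colon_le (Submodule.mem_colon_singleton.2 hp_colon))

lemma sub_C_eval_mem_span {R κ : Type*} [CommRing R] (x : κ → R) (p : MvPolynomial κ R) :
    p - C (eval x p) ∈ Ideal.span (Set.range fun j => X j - C (x j)) := by
  set J := Ideal.span (Set.range fun j => X j - C (x j))
  have mk_eq : Ideal.Quotient.mk J = ((Ideal.Quotient.mk J).comp C).comp (eval x) := by
    refine MvPolynomial.ringHom_ext (by simp) fun j => ?_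
    simpa using Ideal.Quotient.eq.2 (Ideal.subset_span ⟨j, rfl⟩ : X j - C (x j) ∈ J)
  exact Ideal.Quotient.eq.1 (congrArg (· p) mk_eq)

lemma exists_eval_eq {F κ τ : Type*} [Field F] [Finite τ] {x : τ → κ → F}
    (hx : Function.Injective x) (c : τ → F) : ∃ p : MvPolynomial κ F, ∀ t, eval (x t) p = c t := by
  have coprime : Pairwise (Function.onFun IsCoprime fun t => RingHom.ker (eval (x t))) := by
    intro s t hst
    obtain ⟨j, hj⟩ := Function.ne_iff.1 (hx.ne hst)
    have := RingHom.ker_isMaximal_of_surjective (eval (x s)) fun c => ⟨C c, eval_C c⟩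
    have := RingHom.ker_isMaximal_of_surjective (eval (x t)) fun c => ⟨C c, eval_C c⟩
    refine Ideal.isCoprime_of_isMaximal fun hker => hj ?_
    have : X j - C (x s j) ∈ RingHom.ker (eval (x t)) :=
      hker.le (by simp [RingHom.mem_ker])
    simpa [RingHom.mem_ker, sub_eq_zero, eq_comm] using this
  obtain ⟨p, hp⟩ := Ideal.exists_forall_sub_mem_ideal coprime fun t => C (c t)
  exact ⟨p, fun t => by simpa [RingHom.mem_ker, sub_eq_zero] using hp t⟩

end Ideals

lemma encard_le_of_forall_finset_card_le {α : Type*} {s : Set α} {n : ℕ}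
    (h : ∀ T : Finset α, ↑T ⊆ s → T.card ≤ n) : s.encard ≤ n := by
  by_contra! hlt
  obtain ⟨T, hT, hcard⟩ := Set.exists_subset_encard_eq (Order.add_one_le_of_lt hlt)
  have hfin : T.Finite := Set.finite_of_encard_eq_coe (k := n + 1) (by simpa using hcard)
  lift T to Finset α using hfin
  have := h T hT
  rw [Set.encard_coe_eq_coe_finsetCard] at hcard
  norm_cast at hcard
  omega

section ProductSystems

open MvPolynomial

variable {ι κ : Type*} [Fintype ι] [Fintype κ]

/-- The polynomial of the `i`-th row of the matrix `a`: its values are the left-hand sides of the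
systems `∏ j, (x j - a i j) = b i`, and `aeval (rowProd a)` is the comorphism of the map
`x ↦ (∏ j, (x j - a i j))ᵢ` between affine spaces. -/
noncomputable def rowProd {R : Type*} [CommRing R] (a : ι → κ → R) (i : ι) : MvPolynomial κ R :=
  ∏ j, (X j - C (a i j))

lemma isIntegral_aeval_rowProd {R : Type*} [CommRing R] [IsDomain R]
    (hcard : Fintype.card κ ≤ Fintype.card ι) {a : ι → κ → R}
    (ha : ∀ i i' j, i ≠ i' → IsUnit (a i j - a i' j)) :
    (aeval (rowProd a) : MvPolynomial ι R →ₐ[R] MvPolynomial κ R).toRingHom.IsIntegral := by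
  let φ : MvPolynomial ι R →ₐ[R] MvPolynomial κ R := aeval (rowProd a)
  let L := FractionRing (MvPolynomial κ R)
  let : Algebra (MvPolynomial ι R) (MvPolynomial κ R) := φ.toRingHom.toAlgebra
  have algebraMap_C (c : R) : algebraMap (MvPolynomial ι R) (MvPolynomial κ R) (C c) = C c :=
    aeval_C _ c
  have isIntegral_X (j : κ) : IsIntegral (MvPolynomial ι R) (X j : MvPolynomial κ R) := by
    refine (isIntegral_algebraMap_iff (IsFractionRing.injective (MvPolynomial κ R) L)).1 <|
      isIntegral_of_prod_sub_mem_range hcard (a := fun i j => C (a i j))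
        (x := fun j => algebraMap _ L (X j)) ?_ ?_ j
    · intro i i' j hne
      simpa using (ha i i' j hne).map C
    · refine fun i => ⟨X i, ?_⟩
      have : algebraMap (MvPolynomial ι R) (MvPolynomial κ R) (X i) = rowProd a i := aeval_X _ i
      simp only [IsScalarTower.algebraMap_apply (MvPolynomial ι R) (MvPolynomial κ R) L, this,
        rowProd, map_prod, map_sub, algebraMap_C]
  intro p
  change IsIntegral (MvPolynomial ι R) p
  induction p using MvPolynomial.induction_on with
  | C c => exact algebraMap_C c ▸ isIntegral_algebraMap
  | add p q hp hq => exact hp.add hq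
  | mul_X p j hp => exact hp.mul (isIntegral_X j)

lemma exists_sub_sum_mem_span_rowProd [DecidableEq ι] [DecidableEq κ]
    {F : Type*} [Field F] (hcard : Fintype.card κ ≤ Fintype.card ι)
    {a : ι → κ → F} (ha : ∀ i i' j, i ≠ i' → a i j ≠ a i' j) :
    ∃ e : κ ≃ ι → MvPolynomial κ F, ∀ p, ∃ c : κ ≃ ι → F,
      p - ∑ σ, C (c σ) * e σ ∈ Ideal.span (Set.range (rowProd a)) := by
  let P (σ : κ ≃ ι) (j : κ) : F := a (σ j) j
  have P_injective : Function.Injective P := fun σ τ h => Equiv.ext fun j => by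
    by_contra hne
    exact ha (σ j) (τ j) j hne (congrFun h j)
  choose e he using fun σ => exists_eval_eq P_injective (Pi.single σ (1 : F))
  refine ⟨e, fun p => ⟨fun σ => eval (P σ) p, ?_⟩⟩
  refine iInf_span_le_span_prod hcard (y := fun i j => X j - C (a i j)) ?_ ?_
  · intro i i' j hne
    have : IsUnit (a i' j - a i j) := (sub_ne_zero.2 (ha i' i j hne.symm)).isUnit
    simpa using this.map C
  · refine Ideal.mem_iInf.2 fun τ => ?_
    have eval_eq_zero : eval (P τ) (p - ∑ σ, C (eval (P σ) p) * e σ) = 0 := by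
      simp only [map_sub, map_sum, map_mul, eval_C, he]
      simp [Pi.single_apply]
    have mem_span := sub_C_eval_mem_span (P τ) (p - ∑ σ, C (eval (P σ) p) * e σ)
    rwa [eval_eq_zero, C_0, sub_zero] at mem_span

lemma finrank_le_factorial_of_algebraMap_eq_aeval_rowProd {F : Type*} [Field F]
    [Algebra (MvPolynomial ι F) (MvPolynomial κ F)]
    [Module.Finite (MvPolynomial ι F) (MvPolynomial κ F)]
    [Module.IsTorsionFree (MvPolynomial ι F) (MvPolynomial κ F)]
    (hcard : Fintype.card ι = Fintype.card κ) {a : ι → κ → F}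
    (ha : ∀ i i' j, i ≠ i' → a i j ≠ a i' j)
    (halg : ∀ p : MvPolynomial ι F, algebraMap _ (MvPolynomial κ F) p = aeval (rowProd a) p) :
    Module.finrank (MvPolynomial ι F) (MvPolynomial κ F) ≤ (Fintype.card κ).factorial := by
  classical
  obtain ⟨e, he⟩ := exists_sub_sum_mem_span_rowProd hcard.ge ha
  let 𝔪 : Ideal (MvPolynomial ι F) := Ideal.span (Set.range X)
  have 𝔪_ne_top : 𝔪 ≠ ⊤ := by
    have 𝔪_le_ker : 𝔪 ≤ RingHom.ker (eval (0 : ι → F)) := by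
      rw [Ideal.span_le]
      rintro _ ⟨i, rfl⟩
      simp
    exact ne_top_of_le_ne_top (RingHom.ker_ne_top _) 𝔪_le_ker
  have map_𝔪 : 𝔪.map (algebraMap _ (MvPolynomial κ F)) = Ideal.span (Set.range (rowProd a)) := by
    rw [Ideal.map_span, ← Set.range_comp]
    exact congrArg _ (congrArg _ (funext fun i => by simp [halg]))
  refine (finrank_le_card_of_top_le_span_sup_smul_top 𝔪_ne_top e fun p _ => ?_).trans_eq
    (Fintype.card_equiv (Fintype.equivOfCardEq hcard.symm))
  obtain ⟨c, hc⟩ := he p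
  rw [Ideal.smul_top_eq_map, map_𝔪, ← add_sub_cancel (∑ σ, C (c σ) * e σ) p]
  refine Submodule.add_mem_sup (Submodule.sum_mem _ fun σ _ => ?_) hc
  have : C (c σ) * e σ = (C (c σ) : MvPolynomial ι F) • e σ := by
    simp [Algebra.smul_def, halg]
  exact this ▸ Submodule.smul_mem _ _ (Submodule.subset_span ⟨σ, rfl⟩)

lemma card_le_factorial_of_prod_sub_eq {F : Type*} [Field F] [Infinite F]
    (hcard : Fintype.card ι = Fintype.card κ) {a : ι → κ → F}
    (ha : ∀ i i' j, i ≠ i' → a i j ≠ a i' j) {b : ι → F} {T : Type*} [Fintype T]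
    {x : T → κ → F} (hx : Function.Injective x) (hxb : ∀ t i, ∏ j, (x t j - a i j) = b i) :
    Fintype.card T ≤ (Fintype.card κ).factorial := by
  let φ : MvPolynomial ι F →ₐ[F] MvPolynomial κ F := aeval (rowProd a)
  have φ_isIntegral : φ.toRingHom.IsIntegral :=
    isIntegral_aeval_rowProd hcard.ge fun i i' j hne => (sub_ne_zero.2 (ha i i' j hne)).isUnit
  let : Algebra (MvPolynomial ι F) (MvPolynomial κ F) := φ.toRingHom.toAlgebra
  have : IsScalarTower F (MvPolynomial ι F) (MvPolynomial κ F) :=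
    .of_algebraMap_eq fun c => (φ.commutes c).symm
  have : Algebra.IsIntegral (MvPolynomial ι F) (MvPolynomial κ F) := ⟨φ_isIntegral⟩
  have : Algebra.FiniteType (MvPolynomial ι F) (MvPolynomial κ F) :=
    .of_restrictScalars_finiteType F _ _
  have : Module.Finite (MvPolynomial ι F) (MvPolynomial κ F) := Algebra.IsIntegral.finite
  have : FaithfulSMul (MvPolynomial ι F) (MvPolynomial κ F) :=
    (faithfulSMul_iff_algebraMap_injective _ _).2
      (injective_of_isIntegral_of_card_le hcard.le φ_isIntegral)
  have eval_comp (t : T) :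
      (eval (x t)).comp (algebraMap (MvPolynomial ι F) (MvPolynomial κ F)) = eval b := by
    refine MvPolynomial.ringHom_ext (fun c => ?_) fun i => ?_
    · exact (congrArg (eval (x t)) (aeval_C (rowProd a) c)).trans (by simp)
    · exact (congrArg (eval (x t)) (aeval_X (rowProd a) i)).trans (by simp [rowProd, hxb])
  obtain ⟨c, hc⟩ : ∃ c : T → F, Function.Injective c :=
    ⟨_, ((Fintype.equivFin T).toEmbedding.trans
      (Fin.valEmbedding.trans (Infinite.natEmbedding F))).injective⟩
  obtain ⟨θ, hθ⟩ := exists_eval_eq hx c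
  calc Fintype.card T ≤ Module.finrank (MvPolynomial ι F) (MvPolynomial κ F) :=
        card_le_finrank_of_comp_algebraMap_eq (f := fun t => eval (x t)) (θ := θ) eval_comp
          (by simpa only [hθ] using hc)
    _ ≤ (Fintype.card κ).factorial :=
        finrank_le_factorial_of_algebraMap_eq_aeval_rowProd hcard ha fun _ => rfl

theorem encard_setOf_prod_sub_eq_le_factorial {F : Type*} [Field F]
    (hcard : Fintype.card ι = Fintype.card κ) {a : ι → κ → F}
    (ha : ∀ i i' j, i ≠ i' → a i j ≠ a i' j) (b : ι → F) :
    {x : κ → F | ∀ i, ∏ j, (x j - a i j) = b i}.encard ≤ (Fintype.card κ).factorial := by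
  refine encard_le_of_forall_finset_card_le fun T hT => ?_
  let φ := algebraMap F (AlgebraicClosure F)
  have φ_injective : Function.Injective φ := φ.injective
  rw [← Fintype.card_coe]
  refine card_le_factorial_of_prod_sub_eq hcard (a := fun i j => φ (a i j))
    (fun i i' j hne => φ_injective.ne (ha i i' j hne)) (b := fun i => φ (b i))
    (x := fun t j => φ (t.1 j)) (fun t t' h => ?_) fun t i => ?_
  · exact Subtype.ext (funext fun j => φ_injective (congrFun h j))
  · rw [← hT t.2 i]
    simp

end ProductSystems

section NormEquations

variable {ι κ F K : Type*} [Fintype ι] [Fintype κ] [Field F] [Field K]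

lemma encard_setOf_prod_map_add_eq_le_factorial [Nonempty κ]
    (hcard : Fintype.card ι = Fintype.card κ) (σ : κ → F →+* K) {c : ι → F}
    (hc : Function.Injective c) (b : ι → K) :
    {u : F | ∀ i, ∏ j, σ j (u + c i) = b i}.encard ≤ (Fintype.card κ).factorial := by
  obtain ⟨j₀⟩ := ‹Nonempty κ›
  have hsep (i i' : ι) (j : κ) (hne : i ≠ i') : σ j (-c i) ≠ σ j (-c i') :=
    fun h => hne (hc (neg_injective ((σ j).injective h)))
  refine (Set.encard_le_encard_of_injOn (f := fun u j => σ j u) ?_ ?_).trans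
    (encard_setOf_prod_sub_eq_le_factorial hcard hsep b)
  · exact fun u hu i => by simpa using hu i
  · exact fun u _ u' _ h => (σ j₀).injective (congrFun h j₀)

lemma encard_setOf_prod_map_mem_le [Nonempty κ] (hcard : Fintype.card ι = Fintype.card κ)
    (σ : κ → F →+* K) {c d : ι → F} (hc : Function.Injective c) (hd : ∀ i, d i ≠ 0)
    (Z : Finset K) :
    {u : F | ∀ i, ∏ j, σ j (d i * (u + c i)) ∈ Z}.encard ≤
      (Z.card ^ Fintype.card ι * (Fintype.card κ).factorial : ℕ) := by
  classical
  let S (z : ι → K) : Set F := {u | ∀ i, ∏ j, σ j (u + c i) = z i / ∏ j, σ j (d i)}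
  have subset_biUnion : {u : F | ∀ i, ∏ j, σ j (d i * (u + c i)) ∈ Z} ⊆
      ⋃ z ∈ Fintype.piFinset fun _ => Z, S z := by
    intro u hu
    refine Set.mem_biUnion (Fintype.mem_piFinset.2 hu) fun i => ?_
    have : ∏ j, σ j (d i) ≠ 0 := Finset.prod_ne_zero_iff.2 fun j _ => by simpa using hd i
    simp only [map_mul, Finset.prod_mul_distrib, mul_div_cancel_left₀ _ this]
  calc _ ≤ ∑ z ∈ Fintype.piFinset fun _ => Z, (S z).encard :=
        (Set.encard_le_encard subset_biUnion).trans (Finset.set_encard_biUnion_le _ _)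
    _ ≤ ∑ _z ∈ Fintype.piFinset fun _ : ι => Z, ((Fintype.card κ).factorial : ℕ∞) :=
        Finset.sum_le_sum fun z _ => encard_setOf_prod_map_add_eq_le_factorial hcard σ hc _
    _ = _ := by simp

end NormEquations

section Plane

/-- The symmetric bilinear form on the plane which defines adjacency in the graph. -/
def pairing {R : Type*} [CommRing R] (p q : R × R) : R := p.1 * q.1 + p.2 * q.2

/-- The determinant of two vectors of the plane; over a field it vanishes iff they are linearly
dependent. -/
def wedge {R : Type*} [CommRing R] (p q : R × R) : R := p.1 * q.2 - q.1 * p.2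

section CommRing

variable {R : Type*} [CommRing R]

lemma wedge_mul_pairing (a b c x : R × R) :
    wedge a b * pairing x c = wedge a c * pairing x b + wedge c b * pairing x a := by
  simp only [pairing, wedge]; ring

lemma wedge_mul_wedge (a b c d : R × R) :
    wedge a b * wedge c d = wedge c b * wedge a d - wedge d b * wedge a c := by
  simp only [wedge]; ring

lemma eq_of_pairing_eq [IsDomain R] {a b x y : R × R} (hab : wedge a b ≠ 0)
    (ha : pairing x a = pairing y a) (hb : pairing x b = pairing y b) : x = y := by
  simp only [pairing, wedge] at ha hb hab
  refine Prod.ext (mul_left_cancel₀ hab ?_) (mul_left_cancel₀ hab ?_)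
  · linear_combination b.2 * ha - a.2 * hb
  · linear_combination a.1 * hb - b.1 * ha

end CommRing

lemma encard_setOf_pairing_le {ι κ F K : Type*} [Fintype ι] [Fintype κ] [Field F] [Field K]
    [Nonempty κ] (hcard : Fintype.card ι = Fintype.card κ) (σ : κ → F →+* K) (Z : Finset K)
    {a : F × F} {b : ι → F × F} (hab : ∀ i, wedge a (b i) ≠ 0)
    (hb : ∀ i i', i ≠ i' → wedge (b i) (b i') ≠ 0) :
    {x : F × F | pairing x a = 1 ∧ ∀ i, ∏ j, σ j (pairing x (b i)) ∈ Z}.encard ≤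
      (Z.card ^ Fintype.card ι * (Fintype.card κ).factorial : ℕ) := by
  have : Nonempty ι := Fintype.card_pos_iff.1 (hcard ▸ Fintype.card_pos)
  obtain ⟨o⟩ := this
  have pairing_eq {x : F × F} (hx : pairing x a = 1) (i : ι) : pairing x (b i) =
      wedge a (b i) / wedge a (b o) * (pairing x (b o) + wedge (b i) (b o) / wedge a (b i)) := by
    have h := wedge_mul_pairing a (b o) (b i) x
    have := hab i
    have := hab o
    field_simp
    linear_combination h + wedge (b i) (b o) * hx
  have slope_injective : Function.Injective fun i => wedge (b i) (b o) / wedge a (b i) := by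
    intro i i' h
    by_contra hne
    refine mul_ne_zero (hab o) (hb i i' hne) ?_
    rw [wedge_mul_wedge, sub_eq_zero]
    exact (div_eq_div_iff (hab i) (hab i')).1 h
  refine (Set.encard_le_encard_of_injOn (f := fun x => pairing x (b o)) ?_ ?_).trans
    (encard_setOf_prod_map_mem_le hcard σ slope_injective
      (fun i => div_ne_zero (hab i) (hab o)) Z)
  · exact fun x hx i => pairing_eq hx.1 i ▸ hx.2 i
  · exact fun x hx y hy h => eq_of_pairing_eq (hab o) (hx.1.trans hy.1.symm) h

end Plane

section Graph

variable {F : Type} [Field F] {H : Subgroup Fˣ}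

lemma grel_equivalence (H : Subgroup Fˣ) : Equivalence (Grel H) where
  refl _ := ⟨1, H.one_mem, by simp, by simp⟩
  symm := by
    rintro p p' ⟨h, hh, h₁, h₂⟩
    exact ⟨h⁻¹, H.inv_mem hh, by simp [h₁], by simp [h₂]⟩
  trans := by
    rintro p p' p'' ⟨h, hh, h₁, h₂⟩ ⟨k, hk, k₁, k₂⟩
    exact ⟨h * k, H.mul_mem hh hk, by simp [h₁, k₁, mul_assoc], by simp [h₂, k₂, mul_assoc]⟩

lemma grel_of_mk_eq_mk {p p' : {p : F × F // p ≠ 0}}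
    (h : Quot.mk (Grel H) p = Quot.mk (Grel H) p') : Grel H p p' :=
  (grel_equivalence H).eqvGen_iff.1 (Quot.eqvGen_exact h)

lemma memH_mul {x y : F} (hx : memH H x) (hy : memH H y) : memH H (x * y) := by
  obtain ⟨h, hh, rfl⟩ := hx
  obtain ⟨k, hk, rfl⟩ := hy
  exact ⟨h * k, H.mul_mem hh hk, Units.val_mul h k⟩

lemma memH_pairing_of_gAdj {p p' : {p : F × F // p ≠ 0}}
    (h : GAdj H (Quot.mk _ p) (Quot.mk _ p')) : memH H (pairing p.1 p'.1) := by
  obtain ⟨s, s', hps, hps', hss'⟩ := h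
  obtain ⟨k, hk, k₁, k₂⟩ := grel_of_mk_eq_mk hps
  obtain ⟨l, hl, l₁, l₂⟩ := grel_of_mk_eq_mk hps'
  have : pairing p.1 p'.1 = k * l * (s.1.1 * s'.1.1 + s.1.2 * s'.1.2) := by
    rw [pairing, k₁, k₂, l₁, l₂]; ring
  exact this ▸ memH_mul (memH_mul ⟨k, hk, rfl⟩ ⟨l, hl, rfl⟩) hss'

lemma grel_of_wedge_eq_zero {p p' : {p : F × F // p ≠ 0}} {x : F × F}
    (hpp' : wedge p.1 p'.1 = 0) (hp : memH H (pairing x p.1)) (hp' : memH H (pairing x p'.1)) :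
    Grel H p p' := by
  obtain ⟨h, hh, h_eq⟩ := hp
  obtain ⟨k, hk, k_eq⟩ := hp'
  simp only [pairing, wedge] at h_eq k_eq hpp'
  refine ⟨k⁻¹ * h, H.mul_mem (H.inv_mem hk) hh, ?_, ?_⟩
  · rw [Units.val_mul, mul_assoc, Units.eq_inv_mul_iff_mul_eq, h_eq, k_eq]
    linear_combination x.2 * hpp'
  · rw [Units.val_mul, mul_assoc, Units.eq_inv_mul_iff_mul_eq, h_eq, k_eq]
    linear_combination -x.1 * hpp'

lemma exists_grel_pairing_eq_one {p p' : {p : F × F // p ≠ 0}} (h : memH H (pairing p.1 p'.1)) :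
    ∃ q, Grel H q p ∧ pairing q.1 p'.1 = 1 := by
  obtain ⟨k, hk, k_eq⟩ := h
  refine ⟨⟨(k⁻¹ : Fˣ) • p.1, (smul_ne_zero_iff_ne k⁻¹).2 p.2⟩, ⟨k⁻¹, H.inv_mem hk, rfl, rfl⟩, ?_⟩
  calc pairing ((k⁻¹ : Fˣ) • p.1) p'.1 = (k⁻¹ : Fˣ) * pairing p.1 p'.1 := by
        simp only [pairing, Units.smul_def, Prod.smul_fst, Prod.smul_snd, smul_eq_mul]; ring
    _ = 1 := by rw [← k_eq, Units.inv_mul]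

lemma setOf_forall_gAdj_subset_image_mk {ι : Type*} {P : ι → {p : F × F // p ≠ 0}} (o : ι) :
    {w | ∀ i, GAdj H w (Quot.mk _ (P i))} ⊆
      Quot.mk (Grel H) '' {x | pairing x.1 (P o).1 = 1 ∧ ∀ i, memH H (pairing x.1 (P i).1)} := by
  intro w hw
  obtain ⟨p, rfl⟩ := Quot.exists_rep w
  obtain ⟨q, hqp, hq⟩ := exists_grel_pairing_eq_one (memH_pairing_of_gAdj (hw o))
  have hmk : Quot.mk (Grel H) q = Quot.mk (Grel H) p := Quot.sound hqp
  exact ⟨q, ⟨hq, fun i => memH_pairing_of_gAdj (hmk ▸ hw i)⟩, hmk⟩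

lemma prod_iterateFrobenius_eq_pow_sum {R : Type*} [CommRing R] (p : ℕ) [ExpChar R p]
    (k m : ℕ) (x : R) :
    ∏ j : Fin m, iterateFrobenius R p (k * j) x = x ^ ∑ j ∈ Finset.range m, (p ^ k) ^ j := by
  simp only [iterateFrobenius_def, pow_mul, ← Finset.prod_pow_eq_pow_sum, Finset.prod_range]

lemma pow_mem_nthRoots_of_memH {t s : ℕ} (ht : t ≠ 0) (hH : H ≤ rootsOfUnity (t * s) F) {x : F}
    (hx : memH H x) : x ^ s ∈ Polynomial.nthRoots t (1 : F) := by
  obtain ⟨h, hh, rfl⟩ := hx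
  rw [Polynomial.mem_nthRoots (Nat.pos_of_ne_zero ht), ← pow_mul, mul_comm]
  exact (mem_rootsOfUnity' _ h).1 (hH hh)

lemma encard_setOf_forall_gAdj_le {K : Type*} [Field K] {n : ℕ} [NeZero n] (σ : Fin n → F →+* K)
    {Z : Finset K} (hZ : ∀ x, memH H x → ∏ j, σ j x ∈ Z) {v : Fin (n + 1) → GVertex F H}
    (hv : Function.Injective v) :
    {w | ∀ i, GAdj H w (v i)}.encard ≤ (Z.card ^ n * n.factorial : ℕ) := by
  obtain hempty | ⟨w, hw⟩ := {w | ∀ i, GAdj H w (v i)}.eq_empty_or_nonempty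
  · simp [hempty]
  choose P hP using fun i => Quot.exists_rep (v i)
  obtain rfl : (fun i => Quot.mk _ (P i)) = v := funext hP
  obtain ⟨x, ⟨-, hx⟩, -⟩ := setOf_forall_gAdj_subset_image_mk 0 hw
  have wedge_ne_zero (i i' : Fin (n + 1)) (hne : i ≠ i') : wedge (P i).1 (P i').1 ≠ 0 :=
    fun h => hne (hv (Quot.sound (grel_of_wedge_eq_zero h (hx i) (hx i'))))
  calc _ ≤ {x : {x : F × F // x ≠ 0} |
          pairing x.1 (P 0).1 = 1 ∧ ∀ i, memH H (pairing x.1 (P i).1)}.encard :=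
        (Set.encard_le_encard (setOf_forall_gAdj_subset_image_mk 0)).trans (Set.encard_image_le _ _)
    _ ≤ {x : F × F | pairing x (P 0).1 = 1 ∧
          ∀ i : Fin n, ∏ j, σ j (pairing x (P i.succ).1) ∈ Z}.encard :=
        Set.encard_le_encard_of_injOn (f := Subtype.val)
          (fun x hx => ⟨hx.1, fun i => hZ _ (hx.2 i.succ)⟩) Subtype.val_injective.injOn
    _ ≤ (Z.card ^ n * n.factorial : ℕ) := by
        simpa using encard_setOf_pairing_le rfl σ Z
          (fun i => wedge_ne_zero 0 i.succ (Fin.succ_ne_zero i).symm)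
          fun i i' hne => wedge_ne_zero i.succ i'.succ ((Fin.succ_injective n).ne hne)

end Graph

lemma exists_expChar_pow_eq_of_dvd_card {q : ℕ} {F : Type*} [Field F] [Fintype F]
    (hq : q ∣ Fintype.card F) : ∃ p k, ExpChar F p ∧ p ^ k = q := by
  obtain ⟨p, n, _, hp, hcard⟩ := FiniteField.card' F
  obtain ⟨k, -, hk⟩ := (Nat.dvd_prime_pow hp).1 (hcard ▸ hq)
  exact ⟨p, k, .prime hp, hk.symm⟩

lemma le_rootsOfUnity_natCard {M : Type*} [CommMonoid M] (H : Subgroup Mˣ) :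
    H ≤ rootsOfUnity (Nat.card H) M := fun h hh =>
  (mem_rootsOfUnity _ h).2 (orderOf_dvd_iff_pow_eq_one.1 (H.orderOf_dvd_natCard hh))

theorem G_Kr_t_free_general {p k r t : ℕ} (hr : 2 ≤ r) (ht : t ≠ 0) {F : Type} [Field F]
    [ExpChar F p] (H : Subgroup Fˣ)
    (hH : H ≤ rootsOfUnity (t * ∑ j ∈ Finset.range (r - 1), (p ^ k) ^ j) F)
    (v : Fin r → GVertex F H) (hv : Function.Injective v) :
    {w : GVertex F H | ∀ i : Fin r, GAdj H w (v i)}.encard ≤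
      (t ^ (r - 1) * (r - 1).factorial : ℕ) := by
  classical
  obtain ⟨n, rfl⟩ : ∃ n, r = n + 1 := ⟨r - 1, by omega⟩
  have : NeZero n := ⟨by omega⟩
  let Z : Finset F := (Polynomial.nthRoots t (1 : F)).toFinset
  have card_Z : Z.card ≤ t :=
    (Multiset.toFinset_card_le _).trans (Polynomial.card_nthRoots t 1)
  have prod_mem_Z (x : F) (hx : memH H x) :
      ∏ j : Fin n, iterateFrobenius F p (k * j) x ∈ Z := by
    rw [prod_iterateFrobenius_eq_pow_sum, Multiset.mem_toFinset]
    exact pow_mem_nthRoots_of_memH ht hH hx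
  refine (encard_setOf_forall_gAdj_le _ prod_mem_Z hv).trans (Nat.cast_le.2 ?_)
  exact Nat.mul_le_mul_right _ (Nat.pow_le_pow_left card_Z n)

/-- For an arbitrary prime power `q`, integer `r ≥ 2` and `t ∣ q−1`, the graph
`G(q^{r−1}, t(1+q+⋯+q^{r−2}))` is `K_{r, t^{r−1}(r−1)!+1}`-free: any `r` pairwise distinct
vertices have at most `t^{r−1}·(r−1)!` common neighbors. -/
theorem G_Kr_t_free {q r t : ℕ} (hq : IsPrimePow q) (hr : 2 ≤ r) (ht : t ∣ q - 1)
    {F : Type} [Field F] [Fintype F] (hF : Fintype.card F = q ^ (r - 1))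
    (H : Subgroup Fˣ) (hH : Nat.card H = t * ∑ j ∈ Finset.range (r - 1), q ^ j)
    (v : Fin r → GVertex F H) (hv : Function.Injective v) :
    {w : GVertex F H | ∀ i : Fin r, GAdj H w (v i)}.ncard ≤
      t ^ (r - 1) * (r - 1).factorial := by
  obtain ⟨p, k, _, rfl⟩ := exists_expChar_pow_eq_of_dvd_card
    (hF ▸ dvd_pow_self q (by omega : r - 1 ≠ 0))
  have ht₀ : t ≠ 0 := left_ne_zero_of_mul (hH ▸ Nat.card_pos.ne')
  exact (Set.encard_le_coe_iff_finite_ncard_le.1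
    (G_Kr_t_free_general hr ht₀ H (hH ▸ le_rootsOfUnity_natCard H) v hv)).2
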